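/- Let τ be a tour of (G_∞, w') and let τ* be the tour of G defined from τ as in the proof of the 3-swap lemma. Suppose there exist a non-edge ṽv' in τ and a G-edge uṽ that is in τ* but not in τ, and suppose that every vertex v'' ∉ {u, ṽ} that is not τ*-consistent satisfies φ(v'') < φ(ṽ). Then there exists an improving 3-swap for τ that removes the non-edge ṽv'. -/

import Mathlib

/-!
Statement 19 (Claim `3_swap_from_infty`): let `τ` be a tour of `(G_∞, w')` and `τ*`
the tour of `G` defined from `τ` as in the proof of Lemma `swap_from_infty`. If there
are a non-edge `ṽv'` in `τ` and a `G`-edge `uṽ` in `τ*` but not in `τ`, and every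
vertex `v'' ∉ {u, ṽ}` that is not `τ*`-consistent has priority `φ v'' < φ ṽ`, then
there is an improving 3-swap for `τ` that removes the non-edge `ṽv'`.

Here `G` is the graph produced by the PLS reduction, given as a `PLSReductionGraph`
recording its structural facts; `G_∞` is the complete graph on the vertices of `G` and
`w'` extends `w` by giving each non-edge `vv'` the weight `M · 3 ^ max (φ v) (φ v')`.
A vertex is `τ*`-consistent if its incident edges in `τ` coincide with its incident
edges in `τ*`. For the claim, the relevant properties of `τ*` are that it is a tour of
`G_∞` containing only `G`-edges.
-/
open Finset

section TSP

variable {V : Type*} [Fintype V] [DecidableEq V]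

/-- A tour of the complete graph on `V`: a permutation forming one cycle through all
vertices. -/
def IsTour (σ : Equiv.Perm V) : Prop :=
  σ.IsCycle ∧ σ.support = Finset.univ

/-- The set of edges used by a tour. -/
def tourEdges (σ : Equiv.Perm V) : Finset (Sym2 V) :=
  Finset.univ.image fun v => s(v, σ v)

/-- The total weight of a tour. -/
def tourWeight (w : Sym2 V → ℝ) (σ : Equiv.Perm V) : ℝ :=
  ∑ e ∈ tourEdges σ, w e

/-- A `k`-swap: replace at most `k` edges of the tour so that again a tour results. -/
def IsKSwap (k : ℕ) (σ σ' : Equiv.Perm V) : Prop :=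
  IsTour σ' ∧ (tourEdges σ \ tourEdges σ').card ≤ k

/-- An improving `k`-swap strictly decreases the total tour weight. -/
def ImprovingKSwap (w : Sym2 V → ℝ) (k : ℕ) (σ σ' : Equiv.Perm V) : Prop :=
  IsKSwap k σ σ' ∧ tourWeight w σ' < tourWeight w σ

/-- A k-Opt locally optimal tour: no improving `k`-swap exists. -/
def IsLocalOpt (w : Sym2 V → ℝ) (k : ℕ) (σ : Equiv.Perm V) : Prop :=
  ∀ σ', ¬ ImprovingKSwap w k σ σ'

end TSP

/-- The degree of a vertex in a (not necessarily decidable) graph. -/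
noncomputable def gdeg {V : Type*} (G : SimpleGraph V) (v : V) : ℕ :=
  (G.neighborSet v).ncard

/-- The graph `G` produced by the PLS reduction, together with its weights, the
priority assignment `φ` and the maximal edge weight `M`; the fields record the
structural facts of the construction used in Section 7:
all degrees are two, three or four, every vertex is a degree-two vertex or adjacent
to one, the priorities are the values `N, …, 1` assigned first to the degree-two
vertices, and `M` bounds all edge weights. -/
structure PLSReductionGraph (V : Type*) [Fintype V] [DecidableEq V] where
  G : SimpleGraph V
  w : Sym2 V → ℝ
  w_nonneg : ∀ e, 0 ≤ w e
  φ : V → ℕ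
  φ_inj : Function.Injective φ
  φ_pos : ∀ v, 1 ≤ φ v
  φ_le : ∀ v, φ v ≤ Fintype.card V
  deg234 : ∀ v, gdeg G v = 2 ∨ gdeg G v = 3 ∨ gdeg G v = 4
  near_deg_two : ∀ v, gdeg G v = 2 ∨ ∃ u, G.Adj v u ∧ gdeg G u = 2
  deg_two_top : ∀ v u, gdeg G v = 2 → gdeg G u ≠ 2 → φ u < φ v
  M : ℝ
  M_pos : 0 < M
  M_max : ∀ e ∈ G.edgeSet, w e ≤ M

open scoped Classical in
/-- The extension `w'` of the weights `w` of `G` to the complete graph `G_∞`: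
a non-edge `vv'` gets the weight `M · 3 ^ max (φ v) (φ v')`. -/
noncomputable def extendW {V : Type*} (G : SimpleGraph V) (w : Sym2 V → ℝ)
    (φ : V → ℕ) (M : ℝ) (e : Sym2 V) : ℝ :=
  if e ∈ G.edgeSet then w e
  else M * 3 ^ (Sym2.lift ⟨fun a b => max (φ a) (φ b), fun a b => max_comm _ _⟩ e)

/-- `v` is `τ*`-consistent: its incident tour edges in `τ` and in `τstar` agree. -/
def ConsistentAt {V : Type*} [Fintype V] [DecidableEq V]
    (τ τstar : Equiv.Perm V) (v : V) : Prop :=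
  {e ∈ tourEdges τ | v ∈ e} = {e ∈ tourEdges τstar | v ∈ e}

section Helpers

variable {V : Type*} [Fintype V] [DecidableEq V]

lemma mem_tourEdges (σ : Equiv.Perm V) (a b : V) :
    s(a, b) ∈ tourEdges σ ↔ σ a = b ∨ σ b = a := by
  unfold tourEdges
  simp only [Finset.mem_image, Finset.mem_univ, true_and]
  constructor
  · rintro ⟨c, hc⟩
    rw [Sym2.eq_iff] at hc
    rcases hc with ⟨rfl, h⟩ | ⟨rfl, h⟩
    · exact Or.inl h
    · exact Or.inr h
  · rintro (h | h)
    · exact ⟨a, by rw [h]⟩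
    · exact ⟨b, by rw [h, Sym2.eq_swap]⟩

lemma tourEdges_inv (σ : Equiv.Perm V) : tourEdges σ⁻¹ = tourEdges σ := by
  ext e
  induction e using Sym2.ind with
  | _ a b =>
    rw [mem_tourEdges, mem_tourEdges, Equiv.Perm.inv_eq_iff_eq, Equiv.Perm.inv_eq_iff_eq]
    constructor
    · rintro (h | h)
      · exact Or.inr h.symm
      · exact Or.inl h.symm
    · rintro (h | h)
      · exact Or.inr h.symm
      · exact Or.inl h.symm

lemma isTour_inv {σ : Equiv.Perm V} (h : IsTour σ) : IsTour σ⁻¹ :=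
  ⟨h.1.inv, by rw [Equiv.Perm.support_inv]; exact h.2⟩

lemma tour_cycleOn {σ : Equiv.Perm V} (h : IsTour σ) :
    σ.IsCycleOn ((Finset.univ : Finset V) : Set V) := by
  have := h.1.isCycleOn
  have h2 : {x | σ x ≠ x} = ((Finset.univ : Finset V) : Set V) := by
    rw [← h.2]; ext x; simp
  rwa [h2] at this

/-- two tour neighbours determine the successor -/
lemma succ_of_two {σ : Equiv.Perm V} {a b c : V} (hb : s(a, b) ∈ tourEdges σ)
    (hc : s(a, c) ∈ tourEdges σ) (hbc : b ≠ c) : σ a = b ∨ σ a = c := by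
  rw [mem_tourEdges] at hb hc
  by_contra hcon
  push Not at hcon
  have h1 : σ b = a := hb.resolve_left hcon.1
  have h2 : σ c = a := hc.resolve_left hcon.2
  exact hbc (σ.injective (h1.trans h2.symm))

lemma third_nbr {σ : Equiv.Perm V} {a b c d : V} (hb : s(a, b) ∈ tourEdges σ)
    (hc : s(a, c) ∈ tourEdges σ) (hd : s(a, d) ∈ tourEdges σ) (hbc : b ≠ c) :
    d = b ∨ d = c := by
  rw [mem_tourEdges] at hb hc hd
  have inj := σ.injective
  by_contra hcon
  push Not at hcon
  rcases hb with hb | hb <;> rcases hc with hc | hc <;> rcases hd with hd | hd <;>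
    first
    | exact hbc (hb.symm.trans hc)
    | exact hbc (inj (hb.trans hc.symm))
    | exact hcon.1 (hd.symm.trans hb)
    | exact hcon.1 (inj (hd.trans hb.symm))
    | exact hcon.2 (hd.symm.trans hc)
    | exact hcon.2 (inj (hd.trans hc.symm))

lemma no_two {σ : Equiv.Perm V} (h : IsTour σ) (hn : 3 ≤ Fintype.card V) (a : V) :
    σ (σ a) ≠ a := by
  intro h2
  have := (tour_cycleOn h).pow_apply_eq_pow_apply (Finset.mem_univ a) (m := 2) (n := 0)
  have h3 := this.1 (by simpa [pow_two] using h2)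
  rw [Finset.card_univ] at h3
  have := Nat.le_of_dvd (by norm_num) ((Nat.modEq_zero_iff_dvd).1 h3)
  omega

lemma edge_inj {σ : Equiv.Perm V} (h : IsTour σ) (hn : 3 ≤ Fintype.card V) {a b : V}
    (he : s(a, σ a) = s(b, σ b)) : a = b := by
  rw [Sym2.eq_iff] at he
  rcases he with ⟨h1, -⟩ | ⟨h1, h2⟩
  · exact h1
  · subst h1
    exact absurd h2 (no_two h hn b)

/-- A cyclic enumeration of `V` yields a tour. -/
lemma build_tour (hn : 2 ≤ Fintype.card V) (y : ℕ → V)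
    (hinj : ∀ k < Fintype.card V, ∀ m < Fintype.card V, y k = y m → k = m)
    (hclose : y (Fintype.card V) = y 0) :
    ∃ σ : Equiv.Perm V, IsTour σ ∧ (∀ k < Fintype.card V, σ (y k) = y (k + 1)) ∧
      ∀ v, ∃ k < Fintype.card V, y k = v := by
  obtain ⟨m, hm⟩ : ∃ m, Fintype.card V = m + 1 := ⟨Fintype.card V - 1, by omega⟩
  rw [hm] at hinj hclose hn ⊢
  let f : Fin (m + 1) → V := fun k => y k
  have hf : Function.Bijective f := by
    rw [Fintype.bijective_iff_injective_and_card]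
    refine ⟨fun a b hab => Fin.ext (hinj a a.2 b b.2 hab), by simp [hm]⟩
  let e := Equiv.ofBijective f hf
  let σ : Equiv.Perm V := (e.symm.trans (finRotate (m + 1))).trans e
  have hsurj : ∀ v, ∃ k < m + 1, y k = v := fun v => by
    obtain ⟨k, hk⟩ := hf.2 v
    exact ⟨k, k.2, hk⟩
  have hstep : ∀ k < m + 1, σ (y k) = y (k + 1) := by
    intro k hk
    have h1 : e.symm (y k) = ⟨k, hk⟩ := by
      rw [Equiv.symm_apply_eq]; rfl
    have h2 : σ (y k) = e (finRotate (m + 1) ⟨k, hk⟩) := by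
      simp only [σ, Equiv.trans_apply, h1]
    rw [h2]
    by_cases hkm : k < m
    · rw [finRotate_of_lt hkm]; rfl
    · have hkm' : k = m := by omega
      subst hkm'
      rw [hclose]
      have := @finRotate_last' k
      rw [this]; rfl
  have hne : ∀ v, σ v ≠ v := by
    intro v
    obtain ⟨k, hk, rfl⟩ := hsurj v
    rw [hstep k hk]
    intro h
    by_cases hkm : k < m
    · have := hinj (k + 1) (by omega) k hk h
      omega
    · have hkm' : k = m := by omega
      subst hkm'
      rw [hclose] at h
      have := hinj 0 (by omega) k hk h
      omega
  have hpow : ∀ k < m + 1, (σ ^ k) (y 0) = y k := by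
    intro k
    induction k with
    | zero => intro _; rfl
    | succ k ih =>
      intro hk
      rw [pow_succ', Equiv.Perm.mul_apply, ih (by omega), hstep k (by omega)]
  refine ⟨σ, ⟨⟨y 0, hne _, fun v _ => ?_⟩, ?_⟩, hstep, hsurj⟩
  · obtain ⟨k, hk, rfl⟩ := hsurj v
    exact ⟨k, by rw [zpow_natCast]; exact hpow k hk⟩
  · ext v; simp [hne v]

/-- Facts on the enumeration of `V` along a tour. -/
lemma enum_inj {τ : Equiv.Perm V} (h : IsTour τ) (a : V) :
    ∀ k < Fintype.card V, ∀ m < Fintype.card V, (τ ^ k) a = (τ ^ m) a → k = m := by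
  intro k hk m hm he
  have := ((tour_cycleOn h).pow_apply_eq_pow_apply (Finset.mem_univ a)).1 he
  rw [Finset.card_univ] at this
  exact Nat.ModEq.eq_of_lt_of_lt this hk hm

lemma enum_surj {τ : Equiv.Perm V} (h : IsTour τ) (a b : V) :
    ∃ k < Fintype.card V, (τ ^ k) a = b := by
  obtain ⟨k, hk, hb⟩ := (tour_cycleOn h).exists_pow_eq (Finset.mem_univ a) (Finset.mem_univ b)
  rw [Finset.card_univ] at hk
  exact ⟨k, hk, hb⟩

lemma enum_close {τ : Equiv.Perm V} (h : IsTour τ) (a : V) :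
    (τ ^ (Fintype.card V)) a = a := by
  have := (tour_cycleOn h).pow_card_apply (Finset.mem_univ a)
  rwa [Finset.card_univ] at this

lemma enum_succ (τ : Equiv.Perm V) (a : V) (k : ℕ) :
    (τ ^ (k + 1)) a = τ ((τ ^ k) a) := by
  rw [pow_succ', Equiv.Perm.mul_apply]

/-- Generic step: a re-enumeration `x ∘ π` of the tour. -/
lemma reenum {τ : Equiv.Perm V} (h : IsTour τ) (hn : 3 ≤ Fintype.card V) (a : V)
    (π : ℕ → ℕ) (hπlt : ∀ k < Fintype.card V, π k < Fintype.card V)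
    (hπinj : ∀ k < Fintype.card V, ∀ m < Fintype.card V, π k = π m → k = m)
    (hπ0 : π 0 = 0) (hπn : π (Fintype.card V) = Fintype.card V)
    (D : Finset ℕ) (Add : Finset (Sym2 V))
    (hDlt : ∀ d ∈ D, d < Fintype.card V)
    (hfwd : ∀ k < Fintype.card V,
      s((τ ^ (π k)) a, (τ ^ (π (k + 1))) a) ∈ Add ∨
      (∃ m < Fintype.card V, m ∉ D ∧ s((τ ^ (π k)) a, (τ ^ (π (k + 1))) a) =
        s((τ ^ m) a, (τ ^ (m + 1)) a)))
    (hbwd : ∀ m < Fintype.card V, m ∉ D → ∃ k < Fintype.card V,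
      (π k = m ∧ π (k + 1) = m + 1) ∨ (π k = m + 1 ∧ π (k + 1) = m)) :
    ∃ τ₂ : Equiv.Perm V, IsTour τ₂ ∧
      tourEdges τ₂ ⊆ (tourEdges τ \ D.image fun m => s((τ ^ m) a, (τ ^ (m + 1)) a)) ∪ Add ∧
      (tourEdges τ \ D.image fun m => s((τ ^ m) a, (τ ^ (m + 1)) a)) ⊆ tourEdges τ₂ := by
  obtain ⟨σ, hσ, hstep, hsurj⟩ := build_tour (by omega) (fun k => (τ ^ (π k)) a)
    (fun k hk m hm he => hπinj k hk m hm (enum_inj h a _ (hπlt k hk) _ (hπlt m hm) he))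
    (by simp only [hπn, hπ0, enum_close h]; rfl)
  refine ⟨σ, hσ, ?_, ?_⟩
  · intro e he
    obtain ⟨v, -, rfl⟩ := Finset.mem_image.1 he
    obtain ⟨k, hk, rfl⟩ := hsurj v
    rw [hstep k hk]
    rcases hfwd k hk with h1 | ⟨m, hm, hmD, h1⟩
    · exact Finset.mem_union_right _ h1
    · apply Finset.mem_union_left
      rw [h1, Finset.mem_sdiff]
      refine ⟨by rw [mem_tourEdges]; left; rw [enum_succ], ?_⟩
      rw [Finset.mem_image]
      rintro ⟨d, hd, hde⟩
      rw [enum_succ, enum_succ] at hde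
      have := enum_inj h a _ (hDlt d hd) _ hm (edge_inj h hn hde)
      exact hmD (this ▸ hd)
  · intro e he
    rw [Finset.mem_sdiff] at he
    obtain ⟨v, -, rfl⟩ := Finset.mem_image.1 he.1
    obtain ⟨m, hm, rfl⟩ := enum_surj h a v
    have hmD : m ∉ D := fun hd => he.2 (Finset.mem_image.2 ⟨m, hd, by rw [enum_succ]⟩)
    obtain ⟨k, hk, ⟨h1, h2⟩ | ⟨h1, h2⟩⟩ := hbwd m hm hmD
    · have := hstep k hk
      simp only [h1, h2] at this
      rw [mem_tourEdges, ← enum_succ]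
      exact Or.inl this
    · have := hstep k hk
      simp only [h1, h2] at this
      rw [mem_tourEdges, ← enum_succ]
      exact Or.inr this

lemma three_opt {τ : Equiv.Perm V} (h : IsTour τ) (a : V) (i j : ℕ)
    (hi : 2 ≤ i) (hij : i ≤ j) (hj : j < Fintype.card V) :
    ∃ τ₂ : Equiv.Perm V, IsTour τ₂ ∧
      tourEdges τ₂ ⊆ (tourEdges τ \ ({0, i - 1, j} : Finset ℕ).image
        fun m => s((τ ^ m) a, (τ ^ (m + 1)) a)) ∪
        {s(a, (τ ^ i) a), s((τ ^ j) a, τ a), s((τ ^ (i - 1)) a, (τ ^ (j + 1)) a)} ∧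
      (tourEdges τ \ ({0, i - 1, j} : Finset ℕ).image
        fun m => s((τ ^ m) a, (τ ^ (m + 1)) a)) ⊆ tourEdges τ₂ := by
  let π : ℕ → ℕ := fun k => if k = 0 then 0 else if k ≤ j - i + 1 then i - 1 + k
    else if k ≤ j then k - (j - i + 1) else k
  refine reenum h (by omega) a π ?_ ?_ ?_ ?_ {0, i - 1, j} _ ?_ ?_ ?_
  · intro k hk; simp only [π]; split_ifs <;> first | omega | contradiction
  · intro k hk m hm; simp only [π]; split_ifs <;> first | omega | contradiction
  · simp [π]
  · simp only [π]; split_ifs <;> first | omega | contradiction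
  · intro d hd; simp only [Finset.mem_insert, Finset.mem_singleton] at hd; omega
  · intro k hk
    simp only [Finset.mem_insert, Finset.mem_singleton]
    by_cases h0 : k = 0
    · left; left
      have h1 : π k = 0 := by simp [π, h0]
      have h2 : π (k + 1) = i := by simp only [π]; split_ifs <;> first | omega | contradiction
      rw [h1, h2]; rfl
    by_cases hA : k = j - i + 1
    · left; right; left
      have h1 : π k = j := by simp only [π]; split_ifs <;> first | omega | contradiction
      have h2 : π (k + 1) = 1 := by simp only [π]; split_ifs <;> first | omega | contradiction
      rw [h1, h2]; rfl
    by_cases hB : k = j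
    · left; right; right
      have h1 : π k = i - 1 := by simp only [π]; split_ifs <;> first | omega | contradiction
      have h2 : π (k + 1) = j + 1 := by simp only [π]; split_ifs <;> first | omega | contradiction
      rw [h1, h2]
    · right
      refine ⟨π k, ?_, ?_, ?_⟩
      · simp only [π]; split_ifs <;> first | omega | contradiction
      · simp only [π]; split_ifs <;> first | omega | contradiction
      · have h2 : π (k + 1) = π k + 1 := by simp only [π]; split_ifs <;> first | omega | contradiction
        rw [h2]
  · intro m hm hmD
    simp only [Finset.mem_insert, Finset.mem_singleton] at hmD
    refine ⟨if m < i then m + (j - i + 1) else if m ≤ j then m - (i - 1) else m, ?_, Or.inl ?_⟩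
    · split_ifs <;> first | omega | contradiction
    · simp only [π]; constructor <;> split_ifs <;> first | omega | contradiction

lemma two_opt {τ : Equiv.Perm V} (h : IsTour τ) (a : V) (i : ℕ)
    (hi : 2 ≤ i) (hj : i + 1 < Fintype.card V) :
    ∃ τ₂ : Equiv.Perm V, IsTour τ₂ ∧
      tourEdges τ₂ ⊆ (tourEdges τ \ ({0, i} : Finset ℕ).image
        fun m => s((τ ^ m) a, (τ ^ (m + 1)) a)) ∪
        {s(a, (τ ^ i) a), s(τ a, (τ ^ (i + 1)) a)} ∧
      (tourEdges τ \ ({0, i} : Finset ℕ).image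
        fun m => s((τ ^ m) a, (τ ^ (m + 1)) a)) ⊆ tourEdges τ₂ := by
  let π : ℕ → ℕ := fun k => if k = 0 then 0 else if k ≤ i then i + 1 - k else k
  refine reenum h (by omega) a π ?_ ?_ ?_ ?_ {0, i} _ ?_ ?_ ?_
  · intro k hk; simp only [π]; split_ifs <;> first | omega | contradiction
  · intro k hk m hm; simp only [π]; split_ifs <;> first | omega | contradiction
  · simp [π]
  · simp only [π]; split_ifs <;> first | omega | contradiction
  · intro d hd; simp only [Finset.mem_insert, Finset.mem_singleton] at hd; omega
  · intro k hk
    simp only [Finset.mem_insert, Finset.mem_singleton]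
    by_cases h0 : k = 0
    · left; left
      have h1 : π k = 0 := by simp [π, h0]
      have h2 : π (k + 1) = i := by simp only [π]; split_ifs <;> first | omega | contradiction
      rw [h1, h2]; rfl
    by_cases hA : k = i
    · left; right
      have h1 : π k = 1 := by simp only [π]; split_ifs <;> first | omega | contradiction
      have h2 : π (k + 1) = i + 1 := by simp only [π]; split_ifs <;> first | omega | contradiction
      rw [h1, h2]; rfl
    right
    by_cases hB : k < i
    · refine ⟨i - k, by omega, by omega, ?_⟩
      have h1 : π k = i - k + 1 := by simp only [π]; split_ifs <;> first | omega | contradiction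
      have h2 : π (k + 1) = i - k := by simp only [π]; split_ifs <;> first | omega | contradiction
      rw [h1, h2, Sym2.eq_swap]
    · refine ⟨k, by omega, by omega, ?_⟩
      have h1 : π k = k := by simp only [π]; split_ifs <;> first | omega | contradiction
      have h2 : π (k + 1) = k + 1 := by simp only [π]; split_ifs <;> first | omega | contradiction
      rw [h1, h2]
  · intro m hm hmD
    simp only [Finset.mem_insert, Finset.mem_singleton] at hmD
    by_cases hmi : m < i
    · refine ⟨i - m, by omega, Or.inr ?_⟩
      simp only [π]; constructor <;> split_ifs <;> first | omega | contradiction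
    · refine ⟨m, by omega, Or.inl ?_⟩
      simp only [π]; constructor <;> split_ifs <;> first | omega | contradiction

lemma sum_lt_of_swap (W : Sym2 V → ℝ) (hW : ∀ e, 0 ≤ W e) {E E' Rm Add : Finset (Sym2 V)}
    (hRm : Rm ⊆ E) (hsub : E' ⊆ (E \ Rm) ∪ Add) {r : Sym2 V} (hr : r ∈ Rm)
    (hlt : ∑ e ∈ Add, W e < W r) : ∑ e ∈ E', W e < ∑ e ∈ E, W e := by
  have h1 : ∑ e ∈ E', W e ≤ ∑ e ∈ (E \ Rm) ∪ Add, W e :=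
    Finset.sum_le_sum_of_subset_of_nonneg hsub (fun e _ _ => hW e)
  have h2 : ∑ e ∈ (E \ Rm) ∪ Add, W e ≤ ∑ e ∈ E \ Rm, W e + ∑ e ∈ Add, W e := by
    rw [← Finset.sum_union_inter]
    linarith [Finset.sum_nonneg (s := (E \ Rm) ∩ Add) (fun e _ => hW e)]
  have h3 := Finset.sum_sdiff (f := W) hRm
  have h4 : W r ≤ ∑ e ∈ Rm, W e := Finset.single_le_sum (fun e _ => hW e) hr
  linarith

lemma sum_pair_le (W : Sym2 V → ℝ) (hW : ∀ e, 0 ≤ W e) (a b : Sym2 V) :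
    ∑ e ∈ ({a, b} : Finset (Sym2 V)), W e ≤ W a + W b := by
  by_cases h : a = b
  · subst h; simp [hW]
  · rw [Finset.sum_pair h]

lemma sum_triple_le (W : Sym2 V → ℝ) (hW : ∀ e, 0 ≤ W e) (a b c : Sym2 V) :
    ∑ e ∈ ({a, b, c} : Finset (Sym2 V)), W e ≤ W a + W b + W c := by
  have h2 := sum_pair_le W hW b c
  by_cases h : a ∈ ({b, c} : Finset (Sym2 V))
  · rw [Finset.insert_eq_of_mem h]; linarith [hW a]
  · rw [Finset.sum_insert h]; linarith

/-- Improving 2-swap. -/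
lemma imp_two {τ : Equiv.Perm V} (h : IsTour τ) (W : Sym2 V → ℝ) (hW : ∀ e, 0 ≤ W e)
    (a : V) (i : ℕ) (hi : 2 ≤ i) (hj : i + 1 < Fintype.card V)
    (hlt : W s(a, (τ ^ i) a) + W s(τ a, (τ ^ (i + 1)) a) < W s(a, τ a)) :
    ∃ τ₂, ImprovingKSwap W 3 τ τ₂ ∧ s(a, τ a) ∉ tourEdges τ₂ := by
  obtain ⟨τ₂, ht, hs1, hs2⟩ := two_opt h a i hi hj
  set Rm := ({0, i} : Finset ℕ).image fun m => s((τ ^ m) a, (τ ^ (m + 1)) a) with hRm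
  have hr : s(a, τ a) ∈ Rm := by
    rw [hRm, Finset.mem_image]; exact ⟨0, by simp, by simp⟩
  have hRmE : Rm ⊆ tourEdges τ := by
    intro e he
    obtain ⟨m, -, rfl⟩ := Finset.mem_image.1 he
    rw [mem_tourEdges]; left; rw [enum_succ]
  have hinj := enum_inj h a
  refine ⟨τ₂, ⟨⟨ht, ?_⟩, ?_⟩, ?_⟩
  · have : tourEdges τ \ tourEdges τ₂ ⊆ Rm := by
      intro e he
      rw [Finset.mem_sdiff] at he
      by_contra hc
      exact he.2 (hs2 (Finset.mem_sdiff.2 ⟨he.1, hc⟩))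
    calc _ ≤ Rm.card := Finset.card_le_card this
      _ ≤ ({0, i} : Finset ℕ).card := Finset.card_image_le
      _ ≤ 3 := Finset.card_le_two.trans (by norm_num)
  · exact sum_lt_of_swap W hW hRmE hs1 hr (lt_of_le_of_lt (sum_pair_le W hW _ _) hlt)
  · intro hc
    have := hs1 hc
    rw [Finset.mem_union, Finset.mem_sdiff] at this
    rcases this with h1 | h1
    · exact h1.2 hr
    · simp only [Finset.mem_insert, Finset.mem_singleton, Sym2.eq_iff] at h1
      have e0 : a = (τ ^ 0) a := rfl
      have e1 : τ a = (τ ^ 1) a := rfl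
      rcases h1 with (⟨-, h1⟩ | ⟨h1, -⟩) | (⟨h1, -⟩ | ⟨h1, -⟩)
      · have := hinj 1 (by omega) i (by omega) h1; omega
      · have := hinj 0 (by omega) i (by omega) h1; omega
      · have := hinj 0 (by omega) 1 (by omega) h1; omega
      · have := hinj 0 (by omega) (i + 1) (by omega) h1; omega

/-- Improving 3-swap. -/
lemma imp_three {τ : Equiv.Perm V} (h : IsTour τ) (W : Sym2 V → ℝ) (hW : ∀ e, 0 ≤ W e)
    (a : V) (i j : ℕ) (hi : 2 ≤ i) (hij : i ≤ j) (hj : j < Fintype.card V)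
    (hcase : 3 ≤ i ∨ j + 1 < Fintype.card V)
    (hlt : W s(a, (τ ^ i) a) + W s((τ ^ j) a, τ a) + W s((τ ^ (i - 1)) a, (τ ^ (j + 1)) a)
        < W s(a, τ a) ∨
      W s(a, (τ ^ i) a) + W s((τ ^ j) a, τ a) + W s((τ ^ (i - 1)) a, (τ ^ (j + 1)) a)
        < W s((τ ^ (i - 1)) a, (τ ^ i) a)) :
    ∃ τ₂, ImprovingKSwap W 3 τ τ₂ ∧ s(a, τ a) ∉ tourEdges τ₂ := by
  obtain ⟨τ₂, ht, hs1, hs2⟩ := three_opt h a i j hi hij hj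
  set Rm := ({0, i - 1, j} : Finset ℕ).image fun m => s((τ ^ m) a, (τ ^ (m + 1)) a) with hRm
  have hr : s(a, τ a) ∈ Rm := by
    rw [hRm, Finset.mem_image]; exact ⟨0, by simp, by simp⟩
  have hr2 : s((τ ^ (i - 1)) a, (τ ^ i) a) ∈ Rm := by
    rw [hRm, Finset.mem_image]; exact ⟨i - 1, by simp, by rw [Nat.sub_add_cancel (by omega)]⟩
  have hRmE : Rm ⊆ tourEdges τ := by
    intro e he
    obtain ⟨m, -, rfl⟩ := Finset.mem_image.1 he
    rw [mem_tourEdges]; left; rw [enum_succ]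
  have hinj := enum_inj h a
  refine ⟨τ₂, ⟨⟨ht, ?_⟩, ?_⟩, ?_⟩
  · have : tourEdges τ \ tourEdges τ₂ ⊆ Rm := by
      intro e he
      rw [Finset.mem_sdiff] at he
      by_contra hc
      exact he.2 (hs2 (Finset.mem_sdiff.2 ⟨he.1, hc⟩))
    calc _ ≤ Rm.card := Finset.card_le_card this
      _ ≤ ({0, i - 1, j} : Finset ℕ).card := Finset.card_image_le
      _ ≤ 3 := Finset.card_le_three
  · rcases hlt with hlt | hlt
    · exact sum_lt_of_swap W hW hRmE hs1 hr (lt_of_le_of_lt (sum_triple_le W hW _ _ _) hlt)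
    · exact sum_lt_of_swap W hW hRmE hs1 hr2 (lt_of_le_of_lt (sum_triple_le W hW _ _ _) hlt)
  · intro hc
    have := hs1 hc
    rw [Finset.mem_union, Finset.mem_sdiff] at this
    rcases this with h1 | h1
    · exact h1.2 hr
    · simp only [Finset.mem_insert, Finset.mem_singleton, Sym2.eq_iff] at h1
      rcases h1 with (⟨-, h1⟩ | ⟨h1, -⟩) | (⟨h1, -⟩ | ⟨h1, -⟩) | (⟨h1, -⟩ | ⟨h0, h1⟩)
      · have := hinj 1 (by omega) i (by omega) h1; omega
      · have := hinj 0 (by omega) i (by omega) h1; omega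
      · have := hinj 0 (by omega) j (by omega) h1; omega
      · have := hinj 0 (by omega) 1 (by omega) h1; omega
      · have := hinj 0 (by omega) (i - 1) (by omega) h1; omega
      · have := hinj 1 (by omega) (i - 1) (by omega) h1
        have := hinj 0 (by omega) (j + 1) (by omega) h0
        omega

lemma not_cons {τ τs : Equiv.Perm V} {e : Sym2 V} {v : V} (hv : v ∈ e)
    (he : ¬ (e ∈ tourEdges τ ↔ e ∈ tourEdges τs)) : ¬ ConsistentAt τ τs v := by
  intro hc
  unfold ConsistentAt at hc
  have := Finset.ext_iff.1 hc e
  simp only [Finset.mem_filter, hv, and_true] at this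
  exact he this

lemma extendW_nonneg (R : PLSReductionGraph V) (e : Sym2 V) :
    0 ≤ extendW R.G R.w R.φ R.M e := by
  unfold extendW
  split_ifs
  · exact R.w_nonneg e
  · have := R.M_pos; positivity

lemma extendW_edge (R : PLSReductionGraph V) {e : Sym2 V} (he : e ∈ R.G.edgeSet) :
    extendW R.G R.w R.φ R.M e ≤ R.M := by
  unfold extendW
  rw [if_pos he]; exact R.M_max e he

lemma extendW_le (R : PLSReductionGraph V) {a b : V} {t : ℕ} (ha : R.φ a ≤ t)
    (hb : R.φ b ≤ t) : extendW R.G R.w R.φ R.M s(a, b) ≤ R.M * 3 ^ t := by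
  have hM := R.M_pos
  by_cases he : s(a, b) ∈ R.G.edgeSet
  · refine (extendW_edge R he).trans ?_
    have : (1 : ℝ) ≤ 3 ^ t := one_le_pow₀ (by norm_num)
    nlinarith
  · unfold extendW
    rw [if_neg he]
    apply mul_le_mul_of_nonneg_left _ hM.le
    exact pow_le_pow_right₀ (by norm_num) (max_le ha hb)

lemma extendW_ge (R : PLSReductionGraph V) {a b : V} {t : ℕ} (ha : t ≤ R.φ a ∨ t ≤ R.φ b)
    (he : s(a, b) ∉ R.G.edgeSet) : R.M * 3 ^ t ≤ extendW R.G R.w R.φ R.M s(a, b) := by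
  have hM := R.M_pos
  unfold extendW
  rw [if_neg he]
  apply mul_le_mul_of_nonneg_left _ hM.le
  exact pow_le_pow_right₀ (by norm_num) (le_max_iff.2 ha)

/-- A vertex of degree two has all its incident `G`-edges in any tour of `G`. -/
lemma deg_two_edges (R : PLSReductionGraph V) {τs : Equiv.Perm V} (hτs : IsTour τs)
    (hn : 3 ≤ Fintype.card V)
    (hτsG : ∀ e ∈ tourEdges τs, e ∈ R.G.edgeSet) {d b : V} (hd : gdeg R.G d = 2)
    (hb : R.G.Adj d b) : s(d, b) ∈ tourEdges τs := by
  have h1 : s(d, τs d) ∈ tourEdges τs := by rw [mem_tourEdges]; exact Or.inl rfl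
  have h2 : s(d, τs⁻¹ d) ∈ tourEdges τs := by
    rw [mem_tourEdges]; right; simp
  have hne : τs d ≠ τs⁻¹ d := by
    intro h
    apply no_two hτs hn d
    rw [h]; simp
  by_contra hcon
  have hb1 : b ≠ τs d := by rintro rfl; exact hcon h1
  have hb2 : b ≠ τs⁻¹ d := by rintro rfl; exact hcon h2
  have hsub : (({τs d, τs⁻¹ d, b} : Finset V) : Set V) ⊆ R.G.neighborSet d := by
    intro x hx
    simp only [Finset.coe_insert, Finset.coe_singleton, Set.mem_insert_iff,
      Set.mem_singleton_iff] at hx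
    rcases hx with rfl | rfl | rfl
    · exact hτsG _ h1
    · exact hτsG _ h2
    · exact hb
  have := Set.ncard_le_ncard hsub (Set.toFinite _)
  rw [Set.ncard_coe_finset] at this
  have h3 : ({τs d, τs⁻¹ d, b} : Finset V).card = 3 :=
    Finset.card_eq_three.2 ⟨_, _, _, hne, hb1.symm, hb2.symm, rfl⟩
  unfold gdeg at hd
  omega

end Helpers

/-- The claim for a tour oriented so that `v'` is the successor of `vt`. -/
lemma oriented_claim
    {V : Type*} [Fintype V] [DecidableEq V] (R : PLSReductionGraph V)
    (τ τs : Equiv.Perm V) (hτ : IsTour τ) (hτs : IsTour τs)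
    (hτsG : ∀ e ∈ tourEdges τs, e ∈ R.G.edgeSet)
    (vt u : V) (hnonedge : s(vt, τ vt) ∉ R.G.edgeSet)
    (hus : s(vt, u) ∈ tourEdges τs) (hut : s(vt, u) ∉ tourEdges τ)
    (hcons : ∀ v'' : V, v'' ≠ u → v'' ≠ vt → ¬ ConsistentAt τ τs v'' →
      R.φ v'' < R.φ vt) :
    ∃ τ₂, ImprovingKSwap (extendW R.G R.w R.φ R.M) 3 τ τ₂ ∧
      s(vt, τ vt) ∉ tourEdges τ₂ := by
  have hneτ : ∀ v, τ v ≠ v := fun v => by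
    have : v ∈ τ.support := by rw [hτ.2]; exact Finset.mem_univ v
    exact Equiv.Perm.mem_support.1 this
  have huvt : u ≠ vt := fun h => by
    have := hτsG _ hus
    rw [SimpleGraph.mem_edgeSet] at this
    exact this.ne h.symm
  have huv' : u ≠ τ vt := fun h => hut (by rw [mem_tourEdges]; exact Or.inl h.symm)
  have hn : 3 ≤ Fintype.card V := by
    have : ({u, vt, τ vt} : Finset V).card = 3 :=
      Finset.card_eq_three.2 ⟨_, _, _, huvt, huv', (hneτ vt).symm, rfl⟩
    rw [← this]; exact Finset.card_le_univ _
  have hvv's : s(vt, τ vt) ∉ tourEdges τs := fun h => hnonedge (hτsG _ h)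
  have hedge : ∀ v, s(v, τ v) ∈ tourEdges τ := fun v => by
    rw [mem_tourEdges]; exact Or.inl rfl
  -- removed tour edges have low endpoints
  have low : ∀ v, s(v, τ v) ∉ tourEdges τs → (v ≠ u → v ≠ vt → R.φ v < R.φ vt) ∧
      (τ v ≠ u → τ v ≠ vt → R.φ (τ v) < R.φ vt) := by
    intro v hv
    have hh : ¬ (s(v, τ v) ∈ tourEdges τ ↔ s(v, τ v) ∈ tourEdges τs) := by
      simp [hedge v, hv]
    exact ⟨fun h1 h2 => hcons v h1 h2 (not_cons (by simp) hh),
      fun h1 h2 => hcons _ h1 h2 (not_cons (by simp) hh)⟩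
  have hφv' : R.φ (τ vt) < R.φ vt := (low vt hvv's).2 huv'.symm (hneτ vt)
  obtain ⟨t, ht⟩ : ∃ t, R.φ vt = t + 1 := ⟨R.φ vt - 1, by omega⟩
  have ht1 : 1 ≤ t := by have := R.φ_pos (τ vt); omega
  have hM := R.M_pos
  have hp : (3 : ℝ) ≤ 3 ^ t := by
    calc (3 : ℝ) = 3 ^ 1 := by norm_num
      _ ≤ 3 ^ t := pow_le_pow_right₀ (by norm_num) ht1
  have hMp : 3 * R.M ≤ R.M * 3 ^ t := by nlinarith
  have hbig : 3 * (R.M * 3 ^ t) ≤ extendW R.G R.w R.φ R.M s(vt, τ vt) := by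
    have := extendW_ge R (a := vt) (b := τ vt) (t := t + 1) (Or.inl (by omega)) hnonedge
    rw [pow_succ] at this
    linarith
  set W := extendW R.G R.w R.φ R.M with hWdef
  have hW : ∀ e, 0 ≤ W e := extendW_nonneg R
  have hinj := enum_inj hτ vt
  have hclose := enum_close hτ vt
  have hsucc := enum_succ τ vt
  set n := Fintype.card V with hndef
  -- positions
  have pos : ∀ a, a ≠ vt → s(vt, a) ∉ tourEdges τ → ∃ m, 2 ≤ m ∧ m + 1 < n ∧ (τ ^ m) vt = a := by
    intro a ha1 ha2
    obtain ⟨m, hm, hma⟩ := enum_surj hτ vt a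
    refine ⟨m, ?_, ?_, hma⟩
    · by_contra hlt
      have : m = 0 ∨ m = 1 := by omega
      rcases this with rfl | rfl
      · exact ha1 hma.symm
      · exact ha2 (by rw [mem_tourEdges]; exact Or.inl hma)
    · by_contra hlt
      have hmn : m + 1 = n := by omega
      apply ha2
      rw [mem_tourEdges]; right
      rw [← hma, ← hsucc, hmn, hclose]
  have T2 : ∀ m, 2 ≤ m → m + 1 < n → s(vt, (τ ^ m) vt) ∈ tourEdges τs →
      R.φ ((τ ^ (m + 1)) vt) < R.φ vt →
      ∃ τ₂, ImprovingKSwap W 3 τ τ₂ ∧ s(vt, τ vt) ∉ tourEdges τ₂ := by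
    intro m h2 hm hs hφ
    refine imp_two hτ W hW vt m h2 hm ?_
    have h1 : W s(vt, (τ ^ m) vt) ≤ R.M := extendW_edge R (hτsG _ hs)
    have h3 : W s(τ vt, (τ ^ (m + 1)) vt) ≤ R.M * 3 ^ t :=
      extendW_le R (by omega) (by omega)
    linarith
  have T3 : ∀ m j, 2 ≤ m → m ≤ j → j < n → (3 ≤ m ∨ j + 1 < n) →
      s(vt, (τ ^ m) vt) ∈ tourEdges τs → R.φ ((τ ^ j) vt) < R.φ vt →
      (W s((τ ^ (m - 1)) vt, (τ ^ (j + 1)) vt) ≤ R.M * 3 ^ t) →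
      ∃ τ₂, ImprovingKSwap W 3 τ τ₂ ∧ s(vt, τ vt) ∉ tourEdges τ₂ := by
    intro m j h2 hmj hj hc hs hφ hw
    refine imp_three hτ W hW vt m j h2 hmj hj hc (Or.inl ?_)
    have h1 : W s(vt, (τ ^ m) vt) ≤ R.M := extendW_edge R (hτsG _ hs)
    have h3 : W s((τ ^ j) vt, τ vt) ≤ R.M * 3 ^ t :=
      extendW_le R (by omega) (by omega)
    linarith
  have hne0 : ∀ m, 1 ≤ m → m < n → (τ ^ m) vt ≠ vt := by
    intro m h1 h2 h
    have := hinj m h2 0 (by omega) h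
    omega
  have xne : ∀ k m, k < n → m < n → k ≠ m → (τ ^ k) vt ≠ (τ ^ m) vt :=
    fun k m hk hm hkm h => hkm (hinj k hk m hm h)
  obtain ⟨i, hi2, hin, hiu⟩ := pos u huvt hut
  -- `e k` : edge number `k`
  have hcase : ∀ k, s((τ ^ k) vt, (τ ^ (k + 1)) vt) = s((τ ^ k) vt, τ ((τ ^ k) vt)) :=
    fun k => by rw [hsucc]
  have lowL : ∀ k, 1 ≤ k → k < n → k ≠ i → s((τ ^ k) vt, (τ ^ (k + 1)) vt) ∉ tourEdges τs →
      R.φ ((τ ^ k) vt) < R.φ vt := by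
    intro k h1 h2 h3 h4
    rw [hcase] at h4
    exact (low _ h4).1 (by rw [← hiu]; exact xne k i h2 (by omega) h3) (hne0 k h1 h2)
  have lowR : ∀ k, k + 1 < n → k + 1 ≠ i → s((τ ^ k) vt, (τ ^ (k + 1)) vt) ∉ tourEdges τs →
      R.φ ((τ ^ (k + 1)) vt) < R.φ vt := by
    intro k h2 h3 h4
    rw [hcase] at h4
    have := (low _ h4).2
    rw [← hsucc] at this
    exact this (by rw [← hiu]; exact xne (k + 1) i h2 (by omega) h3)
      (hne0 (k + 1) (by omega) h2)
  -- if the outgoing edge of a τs-neighbour of vt is in τs, the incoming is not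
  have inEdge : ∀ m, 2 ≤ m → m + 1 < n → s(vt, (τ ^ m) vt) ∈ tourEdges τs →
      s((τ ^ m) vt, (τ ^ (m + 1)) vt) ∈ tourEdges τs →
      s((τ ^ (m - 1)) vt, (τ ^ m) vt) ∉ tourEdges τs := by
    intro m h2 hm hs h1 h3
    rw [Sym2.eq_swap] at hs h3
    rcases third_nbr hs h1 h3 (hne0 (m + 1) (by omega) hm).symm with h | h
    · exact hne0 (m - 1) (by omega) (by omega) h
    · exact xne (m - 1) (m + 1) (by omega) hm (by omega) h
  rw [← hiu] at hus
  -- Case A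
  by_cases hA : s((τ ^ i) vt, (τ ^ (i + 1)) vt) ∈ tourEdges τs
  swap
  · exact T2 i hi2 hin hus (lowR i hin (by omega) hA)
  have hpu := inEdge i hi2 hin hus hA
  have hi1 : i - 1 + 1 = i := by omega
  have hφp : R.φ ((τ ^ (i - 1)) vt) < R.φ vt :=
    lowL (i - 1) (by omega) (by omega) (by omega) (by rw [hi1]; exact hpu)
  -- Case B1
  by_cases hB1 : ∃ k, i ≤ k ∧ k + 1 < n ∧ s((τ ^ k) vt, (τ ^ (k + 1)) vt) ∉ tourEdges τs
  · obtain ⟨k, hik, hkn, hk⟩ := hB1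
    have hki : k ≠ i := by rintro rfl; exact hk hA
    refine T3 i k hi2 hik (by omega) (Or.inr hkn) hus (lowL k (by omega) (by omega) hki hk) ?_
    have := lowR k hkn (by omega) hk
    exact extendW_le R (by omega) (by omega)
  push Not at hB1
  -- no subtour
  have hy : s((τ ^ (n - 1)) vt, vt) ∉ tourEdges τs := by
    intro hy
    have hall : ∀ k, i ≤ k → k < n → s((τ ^ k) vt, (τ ^ (k + 1)) vt) ∈ tourEdges τs := by
      intro k h1 h2
      by_cases h3 : k + 1 < n
      · exact hB1 k h1 h3
      · have : k = n - 1 := by omega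
        subst this
        rw [Nat.sub_add_cancel (by omega), hclose]; exact hy
    have hinv : ∀ k, i ≤ k → k ≤ n → ∃ m, i ≤ m ∧ m ≤ n ∧ τs ((τ ^ k) vt) = (τ ^ m) vt := by
      intro k h1 h2
      by_cases hkn : k = n
      · subst hkn
        rw [hclose]
        rw [Sym2.eq_swap] at hy
        rcases succ_of_two hus hy (xne i (n - 1) (by omega) (by omega) (by omega)) with h | h
        · exact ⟨i, le_refl _, by omega, h⟩
        · exact ⟨n - 1, by omega, by omega, h⟩
      · have e1 := hall k h1 (by omega)
        by_cases hki : k = i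
        · subst hki
          have e2 := hus
          rw [Sym2.eq_swap] at e2
          rcases succ_of_two e1 e2 (hne0 _ (by omega) (by omega)) with h | h
          · exact ⟨k + 1, by omega, by omega, h⟩
          · exact ⟨n, by omega, by omega, by rw [h, hclose]⟩
        · have e2 := hall (k - 1) (by omega) (by omega)
          rw [Nat.sub_add_cancel (by omega), Sym2.eq_swap] at e2
          have hne : (τ ^ (k + 1)) vt ≠ (τ ^ (k - 1)) vt := by
            by_cases hk1 : k + 1 = n
            · rw [hk1, hclose]
              exact (hne0 _ (by omega) (by omega)).symm
            · exact xne _ _ (by omega) (by omega) (by omega)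
          rcases succ_of_two e1 e2 hne with h | h
          · exact ⟨k + 1, by omega, by omega, h⟩
          · exact ⟨k - 1, by omega, by omega, h⟩
    have hpow : ∀ r : ℕ, ∃ m, i ≤ m ∧ m ≤ n ∧ (τs ^ r) vt = (τ ^ m) vt := by
      intro r
      induction r with
      | zero => exact ⟨n, by omega, le_refl _, by rw [hclose]; rfl⟩
      | succ r ih =>
        obtain ⟨m, h1, h2, h3⟩ := ih
        obtain ⟨m', h4, h5, h6⟩ := hinv m h1 h2
        exact ⟨m', h4, h5, by rw [enum_succ, h3, h6]⟩
    obtain ⟨r, -, hr⟩ := enum_surj hτs vt (τ vt)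
    obtain ⟨m, h1, h2, h3⟩ := hpow r
    rw [hr] at h3
    by_cases hm : m = n
    · rw [hm, hclose] at h3; exact hneτ _ h3
    · have := hinj 1 (by omega) m (by omega) h3
      omega
  have hyφ : R.φ ((τ ^ (n - 1)) vt) < R.φ vt :=
    lowL (n - 1) (by omega) (by omega) (by omega)
      (by rw [Nat.sub_add_cancel (by omega), hclose]; exact hy)
  -- τs-neighbours of vt are not τ-neighbours
  have nbrs : ∀ d, s(vt, d) ∈ tourEdges τs → s(vt, d) ∉ tourEdges τ := by
    intro d hd hd2
    rw [mem_tourEdges] at hd2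
    rcases hd2 with h | h
    · rw [← h] at hd; exact hvv's hd
    · have : d = (τ ^ (n - 1)) vt := by
        apply τ.injective
        rw [h, ← hsucc, Nat.sub_add_cancel (by omega), hclose]
      rw [this, Sym2.eq_swap] at hd
      exact hy hd
  have nbrlow : ∀ d, d ≠ u → s(vt, d) ∈ tourEdges τs → d ≠ vt ∧ R.φ d < R.φ vt := by
    intro d hdu hd
    have hdv : d ≠ vt := fun h => by
      have := hτsG _ hd
      rw [SimpleGraph.mem_edgeSet] at this
      exact this.ne h.symm
    refine ⟨hdv, hcons d hdu hdv (not_cons (e := s(vt, d)) (by simp) ?_)⟩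
    simp [hd, nbrs d hd]
  -- the second neighbour
  obtain ⟨u2, hu2u, hu2s⟩ : ∃ u2, u2 ≠ u ∧ s(vt, u2) ∈ tourEdges τs := by
    by_cases h : τs vt = u
    · refine ⟨τs⁻¹ vt, ?_, by rw [mem_tourEdges]; right; simp⟩
      intro h2
      apply no_two hτs hn vt
      rw [h, ← h2]; simp
    · exact ⟨τs vt, h, by rw [mem_tourEdges]; exact Or.inl rfl⟩
  obtain ⟨hu2v, hu2φ⟩ := nbrlow u2 hu2u hu2s
  obtain ⟨m, hm2, hmn, hmu⟩ := pos u2 hu2v (nbrs u2 hu2s)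
  have hmi : m ≠ i := by
    rintro rfl
    exact hu2u (hmu.symm.trans hiu)
  rw [← hmu] at hu2s
  have hnn : n - 1 + 1 = n := by omega
  by_cases hC : s((τ ^ m) vt, (τ ^ (m + 1)) vt) ∈ tourEdges τs
  swap
  · by_cases hmi1 : m + 1 = i
    · refine T3 i (n - 1) hi2 (by omega) (by omega) (Or.inl (by omega)) hus hyφ ?_
      have h1 : i - 1 = m := by omega
      rw [hnn, hclose, h1, Sym2.eq_swap]
      have : W s(vt, (τ ^ m) vt) ≤ R.M := extendW_edge R (hτsG _ hu2s)
      linarith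
    · exact T2 m hm2 hmn hu2s (lowR m hmn hmi1 hC)
  have hD := inEdge m hm2 hmn hu2s hC
  have hmlt : m < i := by
    by_contra hge
    have := hB1 (m - 1) (by omega) (by omega)
    rw [Nat.sub_add_cancel (by omega)] at this
    exact hD this
  have hφm : R.φ ((τ ^ (m - 1)) vt) < R.φ vt := by
    by_cases h1 : m - 1 = 0
    · omega
    · exact lowL (m - 1) (by omega) (by omega) (by omega)
        (by rw [Nat.sub_add_cancel (by omega)]; exact hD)
  have hφne : R.φ u ≠ R.φ vt := fun h => huvt (R.φ_inj h)
  rcases lt_or_gt_of_ne hφne with hlt | hgt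
  · refine T3 m (i - 1) hm2 (by omega) (by omega) (Or.inr (by omega)) hu2s hφp ?_
    rw [hi1, hiu]
    exact extendW_le R (by omega) (by omega)
  · have hpuG : s((τ ^ (i - 1)) vt, (τ ^ i) vt) ∉ R.G.edgeSet := by
      intro hG
      have hu_deg : gdeg R.G u ≠ 2 := by
        intro hd
        apply hpu
        rw [Sym2.eq_swap, hiu]
        rw [SimpleGraph.mem_edgeSet, hiu] at hG
        exact deg_two_edges R hτs hn hτsG hd hG.symm
      have hvt_deg : gdeg R.G vt ≠ 2 := by
        intro hd
        have := R.deg_two_top vt u hd hu_deg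
        omega
      rcases R.near_deg_two vt with h | ⟨d, hadj, hd⟩
      · exact hvt_deg h
      · have h1 := deg_two_edges R hτs hn hτsG hd hadj.symm
        rw [Sym2.eq_swap] at h1
        have h2 := (nbrlow d (by rintro rfl; exact hu_deg hd) h1).2
        have h3 := R.deg_two_top d vt hd hvt_deg
        omega
    refine imp_three hτ W hW vt i (n - 1) hi2 (by omega) (by omega) (Or.inl (by omega))
      (Or.inr ?_)
    rw [hnn, hclose]
    have h1 : W s(vt, (τ ^ i) vt) ≤ R.M := extendW_edge R (hτsG _ hus)
    have h2 : W s((τ ^ (n - 1)) vt, τ vt) ≤ R.M * 3 ^ t :=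
      extendW_le R (by omega) (by omega)
    have h3 : W s((τ ^ (i - 1)) vt, vt) ≤ R.M * 3 ^ (t + 1) :=
      extendW_le R (by omega) (by omega)
    have h4 : R.M * 3 ^ (t + 2) ≤ W s((τ ^ (i - 1)) vt, (τ ^ i) vt) :=
      extendW_ge R (Or.inr (by rw [hiu]; omega)) hpuG
    rw [pow_succ] at h3
    rw [pow_succ, pow_succ] at h4
    linarith

theorem improving_three_swap_removing_nonedge
    {V : Type*} [Fintype V] [DecidableEq V] (R : PLSReductionGraph V)
    (τ τs : Equiv.Perm V) (hτ : IsTour τ) (hτs : IsTour τs)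
    (hτsG : ∀ e ∈ tourEdges τs, e ∈ R.G.edgeSet)
    (vt v' u : V)
    (hvv' : s(vt, v') ∈ tourEdges τ) (hnonedge : s(vt, v') ∉ R.G.edgeSet)
    (huG : s(u, vt) ∈ R.G.edgeSet)
    (hus : s(u, vt) ∈ tourEdges τs) (hut : s(u, vt) ∉ tourEdges τ)
    (hcons : ∀ v'' : V, v'' ≠ u → v'' ≠ vt → ¬ ConsistentAt τ τs v'' →
      R.φ v'' < R.φ vt) :
    ∃ τ₂, ImprovingKSwap (extendW R.G R.w R.φ R.M) 3 τ τ₂ ∧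
      s(vt, v') ∉ tourEdges τ₂ := by
  have hus' : s(vt, u) ∈ tourEdges τs := by rw [Sym2.eq_swap]; exact hus
  have hut' : s(vt, u) ∉ tourEdges τ := by rw [Sym2.eq_swap]; exact hut
  rcases (mem_tourEdges τ vt v').1 hvv' with h | h
  · subst h
    exact oriented_claim R τ τs hτ hτs hτsG vt u hnonedge hus' hut' hcons
  · have h' : τ⁻¹ vt = v' := by rw [← h]; simp
    subst h'
    have := oriented_claim R τ⁻¹ τs (isTour_inv hτ) hτs hτsG vt u hnonedge hus'
      (by rw [tourEdges_inv]; exact hut')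
      (by
        intro v h1 h2 h3
        apply hcons v h1 h2
        unfold ConsistentAt at h3 ⊢
        rwa [tourEdges_inv] at h3)
    unfold ImprovingKSwap IsKSwap tourWeight at this ⊢
    rwa [tourEdges_inv] at this
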